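/- The element (σ1σ2)^3 σ2^{-4} of the braid group B_3 is quasipositive; that is, it can be written as a finite product of conjugates of the generators σ1 and σ2. (Explicitly, (σ1σ2)^3 σ2^{-4} = (σ2 σ1 σ2^{-1}) · (σ2^3 σ1 σ2^{-3}).) -/

import Mathlib

/-- The single braid relator σ₁σ₂σ₁(σ₂σ₁σ₂)⁻¹ in the free group on two generators. -/
def braidRels : Set (FreeGroup (Fin 2)) :=
  {FreeGroup.of 0 * FreeGroup.of 1 * FreeGroup.of 0 *
    (FreeGroup.of 1 * FreeGroup.of 0 * FreeGroup.of 1)⁻¹}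

/-- The braid group B₃ = ⟨σ₁, σ₂ ∣ σ₁σ₂σ₁ = σ₂σ₁σ₂⟩. -/
abbrev B3 : Type := PresentedGroup braidRels

/-- The generator σ₁ of B₃. -/
def σ₁ : B3 := PresentedGroup.of 0

/-- The generator σ₂ of B₃. -/
def σ₂ : B3 := PresentedGroup.of 1

/-- A 3-braid is quasipositive if it is a finite product of conjugates of the
generators σ₁ and σ₂. -/
def Quasipositive (β : B3) : Prop :=
  ∃ (k : ℕ) (w g : Fin k → B3),
    (∀ i, g i = σ₁ ∨ g i = σ₂) ∧
    β = (List.ofFn fun i => w i * g i * (w i)⁻¹).prod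

namespace Quasipositive

theorem mul {α β : B3} (hα : Quasipositive α) (hβ : Quasipositive β) :
    Quasipositive (α * β) := by
  obtain ⟨m, v, f, hf, rfl⟩ := hα
  obtain ⟨n, w, g, hg, rfl⟩ := hβ
  refine ⟨m + n, Fin.append v w, Fin.append f g, fun i ↦ ?_, ?_⟩
  · cases i using Fin.addCases with
    | left i => simpa only [Fin.append_left] using hf i
    | right i => simpa only [Fin.append_right] using hg i
  · rw [← List.prod_append, ← List.ofFn_fin_append]
    congr 2
    funext i
    cases i using Fin.addCases <;> simp only [Fin.append_left, Fin.append_right]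

theorem conj {β : B3} (hβ : Quasipositive β) (v : B3) : Quasipositive (v * β * v⁻¹) := by
  obtain ⟨k, w, g, hg, rfl⟩ := hβ
  refine ⟨k, fun i ↦ v * w i, g, hg, ?_⟩
  rw [← MulAut.conj_apply, map_list_prod, List.map_ofFn]
  congr 2
  funext i
  simp only [Function.comp_apply, MulAut.conj_apply, mul_inv_rev, mul_assoc]

end Quasipositive

theorem quasipositive_σ₁ : Quasipositive σ₁ :=
  ⟨1, fun _ ↦ 1, fun _ ↦ σ₁, fun _ ↦ Or.inl rfl, by simp⟩

theorem σ₁_mul_σ₂_mul_σ₁ : σ₁ * σ₂ * σ₁ = σ₂ * σ₁ * σ₂ :=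
  PresentedGroup.mk_eq_mk_of_mul_inv_mem (Set.mem_singleton _)

theorem mul_pow_three_eq_sq_of_braid {M : Type*} [Monoid M] {a b : M}
    (h : a * b * a = b * a * b) : (a * b) ^ 3 = (b * a * b) ^ 2 :=
  calc
    (a * b) ^ 3 = (a * b * a) * (b * a * b) := by simp only [pow_three, mul_assoc]
    _ = (b * a * b) ^ 2 := by rw [h, sq]

theorem mul_mul_sq_mul_zpow_neg_four {G : Type*} [Group G] (a b : G) :
    (b * a * b) ^ 2 * b ^ (-4 : ℤ) = (b * a * b⁻¹) * (b ^ 3 * a * (b ^ 3)⁻¹) := by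
  simp [pow_succ, mul_assoc]

/-- The 3-braid (σ₁σ₂)³σ₂⁻⁴ is quasipositive. -/
theorem quasipositive_h_sigma2_neg4 :
    Quasipositive ((σ₁ * σ₂) ^ 3 * σ₂ ^ (-4 : ℤ)) := by
  rw [mul_pow_three_eq_sq_of_braid σ₁_mul_σ₂_mul_σ₁, mul_mul_sq_mul_zpow_neg_four]
  exact (quasipositive_σ₁.conj σ₂).mul (quasipositive_σ₁.conj (σ₂ ^ 3))
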